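/- Let n, t be integers with 2 ≤ t ≤ n−1. Suppose φ: 𝒢_n → 𝒢_n is a complete linear map satisfying: for all G ∈ 𝒢_n, α(φ(G)) = t if and only if α(G) = t. Then for every i ∈ {1,...,n} there exists i' ∈ {1,...,n} such that φ(⋃_{j≠i} G_{ij}) = ⋃_{j≠i'} G_{i'j}; that is, φ maps the star consisting of all edges incident with i to the star consisting of all edges incident with i'. -/

import Mathlib

/-- The independence number of a simple graph: the maximum cardinality of a set
of pairwise nonadjacent vertices. -/
noncomputable def indepNum {V : Type*} (G : SimpleGraph V) : ℕ :=
  sSup {k | ∃ s : Finset V, (∀ a ∈ s, ∀ b ∈ s, a ≠ b → ¬ G.Adj a b) ∧ s.card = k}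

/-- `G_{ij}`: the graph whose only edge is `(i, j)`. -/
def singleEdge {V : Type*} (i j : V) : SimpleGraph V :=
  SimpleGraph.fromEdgeSet {s(i, j)}

/-- A map on graphs is linear if it preserves unions. -/
def IsLinearMap' {V : Type*} (φ : SimpleGraph V → SimpleGraph V) : Prop :=
  ∀ G H : SimpleGraph V, φ (G ⊔ H) = φ G ⊔ φ H

/-- A complete linear map: a linear map sending the complete graph to itself. -/
def IsCompleteLinearMap {V : Type*} (φ : SimpleGraph V → SimpleGraph V) : Prop :=
  IsLinearMap' φ ∧ φ ⊤ = ⊤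

/-- A vertex permutation. -/
def IsVertexPermutation {V : Type*} (φ : SimpleGraph V → SimpleGraph V) : Prop :=
  ∃ σ : Equiv.Perm V, ∀ i j : V, i ≠ j → φ (singleEdge i j) = singleEdge (σ i) (σ j)

/-- An edge permutation. -/
def IsEdgePermutation {V : Type*} (φ : SimpleGraph V → SimpleGraph V) : Prop :=
  φ ⊤ = ⊤ ∧ ∀ i j : V, i ≠ j → ((φ (singleEdge i j)).edgeSet).ncard = 1

/-- The star at `i`: the graph whose edges are all pairs `(i, j)` with `j ≠ i`. -/
def starGraph {V : Type*} (i : V) : SimpleGraph V :=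
  SimpleGraph.fromEdgeSet {e | ∃ j : V, j ≠ i ∧ e = s(i, j)}

/-!
A `t`-set `S` is independent in `G` exactly when `G` lies below the complete split graph of `S`, and
`S` is the only independent `t`-set of that graph. Since `φ` also preserves `α ≥ t`, this produces a
permutation `f` of the `t`-sets such that `S` is independent in `G` iff `f S` is independent in
`φ G`. Counting the `t`-sets around a pair descends this to a permutation `ψ` of the edges with
`e ⊆ S ↔ ψ e ⊆ f S`. For `t ≥ 3`, the edges of a triangle `T` are therefore carried into the
intersection of the sets `f S`, over the `t`-sets `S ⊇ T`, which has at most three vertices because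
it contains no further edges `ψ e`; for `t = 2`, `φ` preserves `α ≥ 3`, and the resulting
permutation of the `3`-sets is used instead. Finally, a permutation of the edges which carries
triangles to triangles carries the edges at a vertex to pairwise meeting edges, no three of which
form a triangle, that is, to a star.
-/

open Finset Set.powersetCard
open scoped Pointwise

section IndependentSets

variable {V : Type*} {G H : SimpleGraph V} {S T : Set V} {a b : V}

lemma isIndepSet_iff_forall_not_adj : G.IsIndepSet S ↔ ∀ a ∈ S, ∀ b ∈ S, ¬ G.Adj a b :=
  ⟨fun h _ ha _ hb hab ↦ h ha hb hab.ne hab, fun h a ha b hb _ ↦ h a ha b hb⟩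

lemma isIndepSet_anti (hGH : G ≤ H) (hS : H.IsIndepSet S) : G.IsIndepSet S :=
  hS.mono' fun _ _ hab hG ↦ hab (hGH hG)

lemma starGraph_adj_iff {i : V} : (starGraph i).Adj a b ↔ a ≠ b ∧ (i = a ∨ i = b) := by
  rw [starGraph, SimpleGraph.fromEdgeSet_adj]
  refine and_comm.trans (and_congr_right fun hab ↦ ⟨?_, ?_⟩)
  · rintro ⟨j, -, hj⟩
    exact Sym2.mem_iff.1 (hj ▸ Sym2.mem_mk_left i j)
  · rintro (rfl | rfl)
    exacts [⟨b, hab.symm, rfl⟩, ⟨a, hab, Sym2.eq_swap⟩]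

lemma isIndepSet_starGraph_pair_iff {i : V} (e : Set.powersetCard V 2) :
    (starGraph i).IsIndepSet (e : Set V) ↔ i ∉ e := by
  refine ⟨fun h hi ↦ ?_, fun hi ↦ isIndepSet_iff_forall_not_adj.2 fun a ha b hb hab ↦ ?_⟩
  · obtain ⟨j, hj, hji⟩ := (coe_nontrivial_iff.2 one_lt_two).exists_ne (s := (e : Set V)) i
    exact h hi hj hji.symm (starGraph_adj_iff.2 ⟨hji.symm, .inl rfl⟩)
  · rcases (starGraph_adj_iff.1 hab).2 with rfl | rfl
    exacts [hi ha, hi hb]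

lemma eq_of_forall_isIndepSet_pair_iff
    (h : ∀ e : Set.powersetCard V 2, G.IsIndepSet (e : Set V) ↔ H.IsIndepSet (e : Set V)) :
    G = H := by
  classical
  ext a b
  by_cases hab : a = b
  · simp only [hab, SimpleGraph.irrefl]
  · have := h ⟨{a, b}, card_pair hab⟩
    simpa [← coe_coe, Set.pairwise_pair, hab, SimpleGraph.adj_comm] using this.not

lemma exists_forall_isIndepSet_iff_not_pair_subset (e : Set.powersetCard V 2) :
    ∃ E : SimpleGraph V, (∀ S : Set V, E.IsIndepSet S ↔ ¬ (e : Set V) ⊆ S) ∧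
      ∀ G : SimpleGraph V, ¬ G.IsIndepSet (e : Set V) → E ≤ G := by
  classical
  obtain ⟨a, b, hab, he⟩ := card_eq_two.1 (card_eq e)
  refine ⟨SimpleGraph.edge a b, fun S ↦ ?_, fun G hG ↦ (SimpleGraph.edge_le_iff G).2 (.inr ?_)⟩
  · rw [isIndepSet_iff_forall_not_adj, ← coe_coe, he, coe_pair, Set.pair_subset_iff]
    grind
  · simpa [← coe_coe, he, Set.pairwise_pair, hab, SimpleGraph.adj_comm] using hG

/-- The complete split graph with independent part `S`: the complete graph on `V` with all edges
inside `S` removed, which is the largest graph in which `S` is independent. -/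
def completeSplitGraph (S : Set V) : SimpleGraph V where
  Adj a b := a ≠ b ∧ ¬ (a ∈ S ∧ b ∈ S)
  symm := ⟨fun _ _ h ↦ ⟨h.1.symm, fun hS ↦ h.2 hS.symm⟩⟩
  loopless := ⟨fun _ h ↦ h.1 rfl⟩

lemma le_completeSplitGraph_iff : G ≤ completeSplitGraph S ↔ G.IsIndepSet S :=
  ⟨fun h _ ha _ hb _ hab ↦ (h hab).2 ⟨ha, hb⟩, fun h _ _ hab ↦ ⟨hab.ne, fun hS ↦
    isIndepSet_iff_forall_not_adj.1 h _ hS.1 _ hS.2 hab⟩⟩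

lemma isIndepSet_completeSplitGraph (S : Set V) : (completeSplitGraph S).IsIndepSet S :=
  le_completeSplitGraph_iff.1 le_rfl

lemma subset_of_isIndepSet_completeSplitGraph (hT : T.Nontrivial)
    (h : (completeSplitGraph S).IsIndepSet T) : T ⊆ S := by
  intro x hx
  obtain ⟨y, hy, hyx⟩ := hT.exists_ne x
  by_contra hxS
  exact h hx hy hyx.symm ⟨hyx.symm, fun hS ↦ hxS hS.1⟩

end IndependentSets

section IndependenceNumber

variable {V : Type*} {G H : SimpleGraph V}

lemma indepNum_eq_simpleGraph_indepNum (G : SimpleGraph V) : indepNum G = G.indepNum := by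
  simp only [indepNum, SimpleGraph.indepNum, SimpleGraph.isNIndepSet_iff]
  rfl

lemma le_indepNum_iff_exists_isIndepSet [Finite V] {k : ℕ} :
    k ≤ G.indepNum ↔ ∃ S : Set.powersetCard V k, G.IsIndepSet (S : Set V) := by
  constructor
  · intro h
    obtain ⟨s, hs, hcard⟩ := G.exists_isNIndepSet_indepNum
    obtain ⟨u, hus, hu⟩ := exists_subset_card_eq (hcard ▸ h)
    exact ⟨⟨u, hu⟩, hs.mono hus⟩
  · rintro ⟨S, hS⟩
    exact card_eq S ▸ SimpleGraph.IsIndepSet.card_le_indepNum (t := (S : Finset V)) hS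

lemma indepNum_anti [Finite V] (hGH : G ≤ H) : H.indepNum ≤ G.indepNum := by
  obtain ⟨S, hS⟩ := le_indepNum_iff_exists_isIndepSet.1 (le_refl H.indepNum)
  exact le_indepNum_iff_exists_isIndepSet.2 ⟨S, isIndepSet_anti hGH hS⟩

lemma indepNum_top_le_one : (⊤ : SimpleGraph V).indepNum ≤ 1 := by
  obtain ⟨s, hs, hcard⟩ := (⊤ : SimpleGraph V).exists_isNIndepSet_indepNum
  exact hcard ▸ card_le_one.2 fun a ha b hb ↦ by_contra fun hab ↦ hs ha hb hab hab

lemma indepNum_bot [Fintype V] : (⊥ : SimpleGraph V).indepNum = Fintype.card V := by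
  obtain ⟨s, -, hcard⟩ := (⊥ : SimpleGraph V).exists_isNIndepSet_indepNum
  exact (hcard ▸ card_le_univ s).antisymm <|
    SimpleGraph.IsIndepSet.card_le_indepNum (t := univ) fun _ _ _ _ _ ↦ id

lemma indepNum_le_indepNum_sup_edge_add_one [Finite V] (G : SimpleGraph V) (a b : V) :
    G.indepNum ≤ (G ⊔ SimpleGraph.edge a b).indepNum + 1 := by
  classical
  obtain ⟨s, hs, hcard⟩ := G.exists_isNIndepSet_indepNum
  have hindep : (G ⊔ SimpleGraph.edge a b).IsIndepSet (s.erase a : Finset V) := by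
    rw [isIndepSet_iff_forall_not_adj] at hs ⊢
    simp only [SimpleGraph.sup_adj, SimpleGraph.edge_adj, coe_erase]
    grind
  calc G.indepNum = #s := hcard.symm
    _ ≤ #(s.erase a) + 1 := Nat.sub_le_iff_le_add.1 pred_card_le_card_erase
    _ ≤ _ := by gcongr; exact hindep.card_le_indepNum

lemma exists_indepNum_eq_of_le [Finite V] (hGH : G ≤ H) {t : ℕ} (hH : H.indepNum ≤ t)
    (hG : t ≤ G.indepNum) : ∃ K, G ≤ K ∧ K ≤ H ∧ K.indepNum = t := by
  obtain ⟨K, ⟨hGK, hKH, htK⟩, hmax⟩ :=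
    (Set.toFinite {K : SimpleGraph V | G ≤ K ∧ K ≤ H ∧ t ≤ K.indepNum}).exists_maximal
      ⟨G, le_rfl, hGH, hG⟩
  refine ⟨K, hGK, hKH, htK.antisymm' <| not_lt.1 fun hlt ↦ ?_⟩
  have hHK : ¬ H ≤ K := fun h ↦ (hlt.trans_le (indepNum_anti h)).not_ge hH
  obtain ⟨a, b, hab, hKab⟩ : ∃ a b, H.Adj a b ∧ ¬ K.Adj a b := by
    simpa [SimpleGraph.le_iff_adj] using hHK
  have hle : K ⊔ SimpleGraph.edge a b ≤ K :=
    hmax ⟨hGK.trans le_sup_left, sup_le hKH ((SimpleGraph.edge_le_iff H).2 (.inr hab)),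
      by have := indepNum_le_indepNum_sup_edge_add_one K a b; omega⟩ le_sup_left
  exact (K.lt_sup_edge a b hab.ne hKab).not_ge hle

section Preservation

variable {φ : SimpleGraph V → SimpleGraph V} {t : ℕ}

lemma indepNum_map_lt_of_lt [Fintype V] (hφ : Monotone φ) (htV : t ≤ Fintype.card V)
    (h : ∀ G, (φ G).indepNum = t ↔ G.indepNum = t) (hG : G.indepNum < t) :
    (φ G).indepNum < t := by
  obtain ⟨K, -, hKG, hK⟩ := exists_indepNum_eq_of_le bot_le hG.le (htV.trans_eq indepNum_bot.symm)
  refine lt_of_le_of_ne ?_ (mt (h G).1 hG.ne)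
  exact (indepNum_anti (hφ hKG)).trans_eq ((h K).2 hK)

lemma le_indepNum_map_iff [Fintype V] (hφ : Monotone φ) (ht : 1 ≤ t) (htV : t ≤ Fintype.card V)
    (h : ∀ G, (φ G).indepNum = t ↔ G.indepNum = t) (G : SimpleGraph V) :
    t ≤ (φ G).indepNum ↔ t ≤ G.indepNum := by
  refine ⟨le_imp_le_of_lt_imp_lt (indepNum_map_lt_of_lt hφ htV h), fun hG ↦ ?_⟩
  obtain ⟨K, hGK, -, hK⟩ := exists_indepNum_eq_of_le le_top (indepNum_top_le_one.trans ht) hG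
  exact ((h K).2 hK).symm.trans_le (indepNum_anti (hφ hGK))

lemma lt_indepNum_map_iff [Fintype V] (hφ : Monotone φ) (ht : 1 ≤ t) (htV : t ≤ Fintype.card V)
    (h : ∀ G, (φ G).indepNum = t ↔ G.indepNum = t) (G : SimpleGraph V) :
    t < (φ G).indepNum ↔ t < G.indepNum := by
  rw [lt_iff_le_and_ne, lt_iff_le_and_ne, le_indepNum_map_iff hφ ht htV h,
    ne_comm, ne_comm (a := t), Ne, Ne, h]

end Preservation

end IndependenceNumber

section SubsetsOfFixedCard

variable {V : Type*} {k : ℕ}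

lemma subset_of_forall_powersetCard_subset [Fintype V] (hk : k < Fintype.card V) {A B : Finset V}
    (hA : #A ≤ k) (h : ∀ S : Set.powersetCard V k, A ⊆ S → B ⊆ S) : B ⊆ A := by
  classical
  intro x hxB
  by_contra hxA
  obtain ⟨S, hAS, hSx, hS⟩ := exists_subsuperset_card_eq (t := univ.erase x)
    (subset_erase.2 ⟨subset_univ A, hxA⟩) hA
    (by rw [card_erase_of_mem (mem_univ x), card_univ]; omega)
  exact notMem_erase x univ (hSx (h ⟨S, hS⟩ hAS hxB))

lemma ncard_powersetCard_superset_congr {A B : Finset V} (hAB : #A = #B) :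
    {S : Set.powersetCard V k | A ⊆ S}.ncard = {S : Set.powersetCard V k | B ⊆ S}.ncard := by
  classical
  obtain ⟨σ, hσ⟩ := Set.powersetCard.isPretransitive.exists_smul_eq
    (⟨A, rfl⟩ : Set.powersetCard V #A) ⟨B, hAB.symm⟩
  obtain rfl : σ • A = B := congrArg Subtype.val hσ
  have hpreimage : {S : Set.powersetCard V k | A ⊆ S} =
      (σ • ·) ⁻¹' {S : Set.powersetCard V k | σ • A ⊆ S} :=
    Set.ext fun S ↦ smul_finset_subset_smul_finset_iff.symm
  rw [hpreimage, Set.ncard_preimage_of_injective_subset_range (MulAction.injective σ)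
    fun S _ ↦ MulAction.surjective σ S]

lemma ncard_powersetCard_subset (A : Finset V) :
    {S : Set.powersetCard V k | (S : Finset V) ⊆ A}.ncard = (#A).choose k := by
  have himage : Subtype.val '' {S : Set.powersetCard V k | (S : Finset V) ⊆ A} =
      (A.powersetCard k : Set (Finset V)) := by
    ext S
    simp only [Set.mem_image, Set.mem_ofPred_eq, Subtype.exists, mem_coe, mem_powersetCard]
    exact ⟨fun ⟨_, hS, hSA, h⟩ ↦ h ▸ ⟨hSA, hS⟩, fun ⟨hSA, hS⟩ ↦ ⟨S, hS, hSA, rfl⟩⟩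
  rw [← Set.ncard_image_of_injective _ Subtype.val_injective, himage, Set.ncard_coe_finset,
    card_powersetCard]

lemma subset_perm_iff_of_card_eq [Finite V] (f : Equiv.Perm (Set.powersetCard V k))
    {A B : Finset V} (hAB : #A = #B) (h : ∀ S : Set.powersetCard V k, A ⊆ S → B ⊆ f S)
    (S : Set.powersetCard V k) : B ⊆ f S ↔ A ⊆ S := by
  have himage : f '' {S : Set.powersetCard V k | A ⊆ S} = {S : Set.powersetCard V k | B ⊆ S} := by
    refine Set.eq_of_subset_of_ncard_le (Set.image_subset_iff.2 h) ?_
    rw [Set.ncard_image_of_injective _ f.injective, ncard_powersetCard_superset_congr hAB]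
  exact (Set.ext_iff.1 himage (f S)).symm.trans f.injective.mem_set_image

lemma card_le_card_of_forall_perm_pair_subset [Finite V] (ψ : Equiv.Perm (Set.powersetCard V 2))
    {A B : Finset V} (hA : A.Nonempty) (h : ∀ e, (ψ e : Finset V) ⊆ B → (e : Finset V) ⊆ A) :
    #B ≤ #A := by
  have hchoose : (#B).choose 2 ≤ (#A).choose 2 := by
    rw [← ncard_powersetCard_subset, ← ncard_powersetCard_subset,
      ← Set.ncard_image_of_injective _ ψ.symm.injective]
    refine Set.ncard_le_ncard (Set.image_subset_iff.2 fun e he ↦ h _ ?_)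
    rwa [ψ.apply_symm_apply]
  by_contra! hlt
  have := Nat.choose_le_choose 2 (Nat.succ_le_of_lt hlt)
  rw [Nat.choose_succ_succ' #A 1, Nat.choose_one_right, one_add_one_eq_two] at this
  have := hA.card_pos
  omega

lemma subset_union_of_card_eq_two [DecidableEq V] {P Q L : Finset V} (hP : #P = 2) (hQ : #Q = 2)
    (hL : #L = 2) (hPQ : P ≠ Q) {v : V} (hvP : v ∈ P) (hvQ : v ∈ Q) (hvL : v ∉ L)
    (hLP : (L ∩ P).Nonempty) (hLQ : (L ∩ Q).Nonempty) : L ⊆ P ∪ Q := by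
  obtain ⟨a, ha⟩ := hLP
  obtain ⟨b, hb⟩ := hLQ
  rw [mem_inter] at ha hb
  have eq_pair {R : Finset V} (hR : #R = 2) {x y : V} (hx : x ∈ R) (hy : y ∈ R) (hxy : x ≠ y) :
      {x, y} = R :=
    eq_of_subset_of_card_le (insert_subset hx (singleton_subset_iff.2 hy))
      (hR.trans_le (card_pair hxy).ge)
  have hab : a ≠ b := by
    rintro rfl
    have hva : v ≠ a := fun h ↦ hvL (h ▸ ha.1)
    exact hPQ ((eq_pair hP hvP ha.2 hva).symm.trans (eq_pair hQ hvQ hb.2 hva))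
  rw [← eq_pair hL ha.1 hb.1 hab]
  grind

end SubsetsOfFixedCard

section TrianglePreserving

/-- The permutation `ψ` of the edges of the complete graph on `V` carries triangles to triangles.
It suffices to bound the number of vertices of the image `T'`, which contains three edges. -/
def PreservesTriangles {V : Type*} (ψ : Equiv.Perm (Set.powersetCard V 2)) : Prop :=
  ∀ T : Set.powersetCard V 3, ∃ T' : Finset V, #T' ≤ 3 ∧
    ∀ e, (ψ e : Finset V) ⊆ T' ↔ (e : Finset V) ⊆ T

variable {V : Type*} [Fintype V] {ψ : Equiv.Perm (Set.powersetCard V 2)}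

lemma perm_pair_inter_nonempty [DecidableEq V] (hV : 3 ≤ Fintype.card V) (hψ : PreservesTriangles ψ)
    {i : V} {e e' : Set.powersetCard V 2} (he : i ∈ e) (he' : i ∈ e') :
    ((ψ e : Finset V) ∩ ψ e').Nonempty := by
  have hinter : 0 < #((e : Finset V) ∩ e') := card_pos.2 ⟨i, mem_inter.2 ⟨he, he'⟩⟩
  have hunion := card_union_add_card_inter (e : Finset V) e'
  rw [card_eq, card_eq] at hunion
  obtain ⟨T, hT, -, hTcard⟩ := exists_subsuperset_card_eq (subset_univ ((e : Finset V) ∪ e'))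
    (n := 3) (by omega) hV
  obtain ⟨T', hT'card, hT'⟩ := hψ ⟨T, hTcard⟩
  have hsub : (ψ e : Finset V) ∪ ψ e' ⊆ T' := union_subset
    ((hT' e).2 (subset_union_left.trans hT)) ((hT' e').2 (subset_union_right.trans hT))
  have hψunion := card_union_add_card_inter (ψ e : Finset V) (ψ e')
  rw [card_eq, card_eq] at hψunion
  have := card_le_card hsub
  exact card_pos.1 (by omega)

lemma exists_forall_mem_perm_pair (hV : 3 ≤ Fintype.card V) (hψ : PreservesTriangles ψ) (i : V) :
    ∃ v, ∀ e : Set.powersetCard V 2, i ∈ e → v ∈ ψ e := by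
  classical
  obtain ⟨j, hj, k, hk, hjk⟩ := (one_lt_card (s := univ.erase i)).1
    (by rw [card_erase_of_mem (mem_univ i), card_univ]; omega)
  replace hj := ne_of_mem_erase hj
  replace hk := ne_of_mem_erase hk
  let e₁ : Set.powersetCard V 2 := ⟨{i, j}, card_pair hj.symm⟩
  let e₂ : Set.powersetCard V 2 := ⟨{i, k}, card_pair hk.symm⟩
  have hi₁ : i ∈ e₁ := mem_insert_self i {j}
  have hi₂ : i ∈ e₂ := mem_insert_self i {k}
  obtain ⟨v, hv⟩ := perm_pair_inter_nonempty hV hψ hi₁ hi₂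
  rw [mem_inter] at hv
  refine ⟨v, fun e he ↦ ?_⟩
  by_contra hve
  have he₁₂ : e₁ ≠ e₂ := fun h ↦ by
    have hj₂ : j ∈ e₂ := h ▸ mem_insert_of_mem (mem_singleton_self j)
    exact (mem_insert.1 hj₂).elim hj fun hjk' ↦ hjk (mem_singleton.1 hjk')
  have hunion : (ψ e : Finset V) ⊆ (ψ e₁ : Finset V) ∪ ψ e₂ :=
    subset_union_of_card_eq_two (card_eq _) (card_eq _) (card_eq _)
      (Subtype.coe_injective.ne (ψ.injective.ne he₁₂)) hv.1 hv.2 hve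
      (perm_pair_inter_nonempty hV hψ he hi₁) (perm_pair_inter_nonempty hV hψ he hi₂)
  obtain ⟨T', -, hT'⟩ := hψ ⟨{i, j, k}, card_eq_three.2 ⟨i, j, k, hj.symm, hk.symm, hjk, rfl⟩⟩
  have heT : (e : Finset V) ⊆ {i, j, k} := (hT' e).1 <| hunion.trans <| union_subset
    ((hT' e₁).2 (by grind)) ((hT' e₂).2 (by grind))
  obtain ⟨x, hx, hxi⟩ := (coe_nontrivial_iff.2 one_lt_two).exists_ne (s := (e : Set V)) i
  have hxjk : x = j ∨ x = k := by simpa [hxi] using heT hx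
  rcases hxjk with rfl | rfl
  · exact hve ((eq_iff_subset.2 (insert_subset he (singleton_subset_iff.2 hx)) : e₁ = e) ▸ hv.1)
  · exact hve ((eq_iff_subset.2 (insert_subset he (singleton_subset_iff.2 hx)) : e₂ = e) ▸ hv.2)

lemma exists_forall_mem_perm_pair_iff (hV : 3 ≤ Fintype.card V) (hψ : PreservesTriangles ψ)
    (i : V) : ∃ v, ∀ e : Set.powersetCard V 2, v ∈ ψ e ↔ i ∈ e := by
  obtain ⟨v, hv⟩ := exists_forall_mem_perm_pair hV hψ i
  refine ⟨v, fun e ↦ ?_⟩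
  simpa only [singleton_subset_iff, mem_coe_iff] using
    subset_perm_iff_of_card_eq ψ (A := {i}) (B := {v}) rfl
      (by simpa only [singleton_subset_iff, mem_coe_iff] using hv) e

end TrianglePreserving

section Transport

variable {V : Type*} {φ : SimpleGraph V → SimpleGraph V} {k : ℕ}

lemma IsLinearMap'.monotone (hφ : IsLinearMap' φ) : Monotone φ := fun G H hGH ↦
  calc φ G ≤ φ G ⊔ φ H := le_sup_left
    _ = φ H := by rw [← hφ, sup_eq_right.2 hGH]

/-- The permutation `f` of the `k`-element vertex sets describes the effect of `φ` on independent
sets of size `k`. For `k = 2` it is the effect on edges, an edge being a dependent pair. -/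
def TransportsIndepSets (φ : SimpleGraph V → SimpleGraph V)
    (f : Equiv.Perm (Set.powersetCard V k)) : Prop :=
  ∀ G S, (φ G).IsIndepSet (f S : Set V) ↔ G.IsIndepSet (S : Set V)

theorem exists_perm_transportsIndepSets [Finite V] (hφ : IsLinearMap' φ) (hk : 2 ≤ k)
    (h : ∀ G, k ≤ (φ G).indepNum ↔ k ≤ G.indepNum) :
    ∃ f : Equiv.Perm (Set.powersetCard V k), TransportsIndepSets φ f := by
  have hexists (S : Set.powersetCard V k) : ∃ S' : Set.powersetCard V k,
      (φ (completeSplitGraph S)).IsIndepSet (S' : Set V) :=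
    le_indepNum_iff_exists_isIndepSet.1 <| (h _).2 <|
      le_indepNum_iff_exists_isIndepSet.2 ⟨S, isIndepSet_completeSplitGraph _⟩
  choose f hf using hexists
  have eq_of_isIndepSet {S T : Set.powersetCard V k}
      (hT : (completeSplitGraph (S : Set V)).IsIndepSet (T : Set V)) : T = S :=
    eq_iff_subset.2 <| subset_of_isIndepSet_completeSplitGraph (coe_nontrivial_iff.2 hk) hT
  have hiff (G S) : (φ G).IsIndepSet (f S : Set V) ↔ G.IsIndepSet (S : Set V) := by
    refine ⟨fun hG ↦ ?_, fun hG ↦ isIndepSet_anti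
      (hφ.monotone (le_completeSplitGraph_iff.2 hG)) (hf S)⟩
    have hsup : (φ (G ⊔ completeSplitGraph S)).IsIndepSet (f S : Set V) := by
      rw [hφ, ← le_completeSplitGraph_iff]
      exact sup_le (le_completeSplitGraph_iff.2 hG) (le_completeSplitGraph_iff.2 (hf S))
    obtain ⟨T, hT⟩ := le_indepNum_iff_exists_isIndepSet.1 <| (h _).1 <|
      le_indepNum_iff_exists_isIndepSet.2 ⟨f S, hsup⟩
    obtain rfl : T = S := eq_of_isIndepSet (isIndepSet_anti le_sup_right hT)
    exact isIndepSet_anti le_sup_left hT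
  have hinj : Function.Injective f := fun S T hST ↦
    (eq_of_isIndepSet ((hiff _ T).1 (hST ▸ hf S))).symm
  exact ⟨Equiv.ofBijective f hinj.bijective_of_finite, hiff⟩

lemma subset_perm_iff_of_isIndepSet_imp [Finite V] {f : Equiv.Perm (Set.powersetCard V k)}
    (hf : TransportsIndepSets φ f) {e p : Set.powersetCard V 2}
    (hp : ∀ G, (φ G).IsIndepSet (p : Set V) → G.IsIndepSet (e : Set V))
    (S : Set.powersetCard V k) : (p : Finset V) ⊆ f S ↔ (e : Finset V) ⊆ S := by
  suffices h : ∀ S : Set.powersetCard V k, (p : Finset V) ⊆ S → (e : Finset V) ⊆ f.symm S by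
    have hcard := (card_eq p).trans (card_eq e).symm
    simpa only [f.symm_apply_apply] using (subset_perm_iff_of_card_eq f.symm hcard h (f S)).symm
  intro S hpS
  obtain ⟨E, hE, -⟩ := exists_forall_isIndepSet_iff_not_pair_subset e
  by_contra heS
  have hmap := (hf E (f.symm S)).2 ((hE _).2 heS)
  rw [f.apply_symm_apply] at hmap
  exact (hE _).1 (hp E (hmap.mono hpS)) Set.Subset.rfl

lemma exists_pair_forall_isIndepSet_imp [Fintype V] (hφ : Monotone φ) (hk : 2 ≤ k)
    (hkV : k ≤ Fintype.card V) {f : Equiv.Perm (Set.powersetCard V k)}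
    (hf : TransportsIndepSets φ f) (e : Set.powersetCard V 2) :
    ∃ p : Set.powersetCard V 2, ∀ G,
      (φ G).IsIndepSet (p : Set V) → G.IsIndepSet (e : Set V) := by
  classical
  obtain ⟨E, hE, hE_le⟩ := exists_forall_isIndepSet_iff_not_pair_subset e
  obtain ⟨S, heS, -, hS⟩ := exists_subsuperset_card_eq (subset_univ (e : Finset V))
    ((card_eq e).trans_le hk) hkV
  have hdep : ¬ (φ E).IsIndepSet (f ⟨S, hS⟩ : Set V) := fun h ↦ (hE _).1 ((hf _ _).1 h) heS
  obtain ⟨c, -, d, -, hcd⟩ : ∃ c ∈ (f ⟨S, hS⟩ : Set V), ∃ d ∈ (f ⟨S, hS⟩ : Set V),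
      (φ E).Adj c d := by
    simpa only [isIndepSet_iff_forall_not_adj, not_forall, not_not, exists_prop] using hdep
  refine ⟨⟨{c, d}, card_pair hcd.ne⟩, fun G ↦ not_imp_not.1 fun hG hφG ↦ ?_⟩
  exact isIndepSet_iff_forall_not_adj.1 hφG c (mem_insert_self c _) d
    (mem_insert_of_mem (mem_singleton_self d)) (hφ (hE_le G hG) hcd)

lemma le_sup'_completeSplitGraph [Fintype V] [DecidableEq V] (hk : k < Fintype.card V)
    {A : Finset V} (hA : #A ≤ k) {G : SimpleGraph V} (hG : G.IsIndepSet (A : Set V))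
    (h : ({S : Set.powersetCard V k | A ⊆ S} : Finset _).Nonempty) :
    G ≤ ({S : Set.powersetCard V k | A ⊆ S} : Finset _).sup' h (completeSplitGraph ·) := by
  intro a b hab
  obtain ⟨S, hAS, hS⟩ : ∃ S : Set.powersetCard V k, A ⊆ S ∧ ¬ {a, b} ⊆ (S : Finset V) := by
    by_contra! hpair
    have hA := subset_of_forall_powersetCard_subset hk hA hpair
    exact isIndepSet_iff_forall_not_adj.1 hG a (hA (mem_insert_self a _)) b
      (hA (mem_insert_of_mem (mem_singleton_self b))) hab
  have hmem : S ∈ ({S : Set.powersetCard V k | A ⊆ S} : Finset _) :=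
    (mem_filter_univ S).2 hAS
  refine le_sup' (fun S : Set.powersetCard V k ↦ completeSplitGraph (S : Set V)) hmem
    ⟨hab.ne, fun habS ↦ hS ?_⟩
  exact insert_subset habS.1 (singleton_subset_iff.2 habS.2)

lemma isIndepSet_map_of_forall_subset [Fintype V] (hφ : IsLinearMap' φ)
    (hkV : k < Fintype.card V) {f : Equiv.Perm (Set.powersetCard V k)}
    (hf : TransportsIndepSets φ f) {A B : Finset V} (hA : #A ≤ k)
    (hAB : ∀ S : Set.powersetCard V k, A ⊆ S → B ⊆ f S) {G : SimpleGraph V}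
    (hG : G.IsIndepSet (A : Set V)) : (φ G).IsIndepSet (B : Set V) := by
  classical
  obtain ⟨S, hAS, -, hS⟩ := exists_subsuperset_card_eq (subset_univ A) hA hkV.le
  have h𝒮 : ({S : Set.powersetCard V k | A ⊆ S} : Finset _).Nonempty :=
    ⟨⟨S, hS⟩, (mem_filter_univ _).2 hAS⟩
  rw [← le_completeSplitGraph_iff]
  refine (hφ.monotone (le_sup'_completeSplitGraph hkV hA hG h𝒮)).trans ?_
  rw [apply_sup'_eq_sup'_comp h𝒮 φ hφ]
  refine sup'_le h𝒮 _ fun S hS ↦ le_completeSplitGraph_iff.2 ?_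
  exact ((hf _ S).2 (isIndepSet_completeSplitGraph _)).mono
    (hAB S ((mem_filter_univ S).1 hS))

theorem exists_perm_pair_transportsIndepSets [Fintype V] (hφ : IsLinearMap' φ) (hk : 2 ≤ k)
    (hkV : k < Fintype.card V) {f : Equiv.Perm (Set.powersetCard V k)}
    (hf : TransportsIndepSets φ f) :
    ∃ ψ : Equiv.Perm (Set.powersetCard V 2), TransportsIndepSets φ ψ := by
  choose ψ hψ using exists_pair_forall_isIndepSet_imp hφ.monotone hk hkV.le hf
  have hsub (e) := subset_perm_iff_of_isIndepSet_imp hf (hψ e)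
  have hinj : Function.Injective ψ := fun e e' hee' ↦ eq_iff_subset.2 <|
    subset_of_forall_powersetCard_subset hkV ((card_eq e').trans_le hk) fun S he' ↦
      (hsub e S).1 (hee' ▸ (hsub e' S).2 he')
  refine ⟨Equiv.ofBijective ψ hinj.bijective_of_finite, fun G e ↦ ⟨hψ e G, fun hG ↦ ?_⟩⟩
  exact isIndepSet_map_of_forall_subset hφ hkV hf ((card_eq e).trans_le hk)
    (fun S ↦ (hsub e S).2) hG

lemma exists_card_le_forall_perm_pair_subset_iff [Fintype V] (hkV : k < Fintype.card V)
    {f : Equiv.Perm (Set.powersetCard V k)} (hf : TransportsIndepSets φ f)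
    {ψ : Equiv.Perm (Set.powersetCard V 2)} (hψ : TransportsIndepSets φ ψ)
    {A : Finset V} (hA : A.Nonempty) (hAk : #A ≤ k) :
    ∃ B : Finset V, #B ≤ #A ∧ ∀ e, (ψ e : Finset V) ⊆ B ↔ (e : Finset V) ⊆ A := by
  classical
  let B : Finset V := {v | ∀ S : Set.powersetCard V k, A ⊆ S → v ∈ f S}
  have hB (e) : (ψ e : Finset V) ⊆ B ↔ (e : Finset V) ⊆ A := by
    calc (ψ e : Finset V) ⊆ B
        ↔ ∀ S : Set.powersetCard V k, A ⊆ S → (ψ e : Finset V) ⊆ f S := by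
          simp only [B, subset_iff (s₂ := filter _ _), mem_filter_univ]
          exact ⟨fun h S hS v hv ↦ h hv S hS, fun h v hv S hS ↦ h S hS hv⟩
      _ ↔ ∀ S : Set.powersetCard V k, A ⊆ S → (e : Finset V) ⊆ S := by
          simp only [subset_perm_iff_of_isIndepSet_imp hf fun G ↦ (hψ G e).1]
      _ ↔ (e : Finset V) ⊆ A :=
          ⟨subset_of_forall_powersetCard_subset hkV hAk, fun he S hS ↦ he.trans hS⟩
  exact ⟨B, card_le_card_of_forall_perm_pair_subset ψ hA fun e ↦ (hB e).1, hB⟩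

end Transport

theorem stmt11_general {V : Type*} [Fintype V] {t : ℕ} (ht : 2 ≤ t) (htV : t < Fintype.card V)
    {φ : SimpleGraph V → SimpleGraph V} (hφ : IsLinearMap' φ)
    (hpres : ∀ G : SimpleGraph V, indepNum (φ G) = t ↔ indepNum G = t) (i : V) :
    ∃ i' : V, φ (starGraph i) = starGraph i' := by
  simp only [indepNum_eq_simpleGraph_indepNum] at hpres
  obtain ⟨f, hf⟩ := exists_perm_transportsIndepSets hφ ht
    (le_indepNum_map_iff hφ.monotone (by omega) htV.le hpres)
  obtain ⟨ψ, hψ⟩ := exists_perm_pair_transportsIndepSets hφ ht htV hf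
  have htriangle : PreservesTriangles ψ := by
    intro T
    rcases ht.eq_or_lt with rfl | ht
    · obtain ⟨g, hg⟩ := exists_perm_transportsIndepSets (k := 3) hφ (by norm_num)
        (lt_indepNum_map_iff hφ.monotone one_le_two htV.le hpres)
      exact ⟨g T, (card_eq (g T)).le, fun e ↦ subset_perm_iff_of_isIndepSet_imp hg (hψ · e |>.1) T⟩
    · have hT : (T : Finset V).Nonempty := coe_nonempty_iff.2 (Nat.le_add_left 1 2)
      simpa only [card_eq T] using
        exists_card_le_forall_perm_pair_subset_iff htV hf hψ hT ((card_eq T).trans_le ht)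
  obtain ⟨v, hv⟩ := exists_forall_mem_perm_pair_iff (ht.trans_lt htV) htriangle i
  refine ⟨v, eq_of_forall_isIndepSet_pair_iff fun e ↦ ?_⟩
  obtain ⟨e, rfl⟩ := ψ.surjective e
  rw [hψ, isIndepSet_starGraph_pair_iff, isIndepSet_starGraph_pair_iff, hv]

theorem stmt11 (n t : ℕ) (ht : 2 ≤ t) (htn : t ≤ n - 1)
    (φ : SimpleGraph (Fin n) → SimpleGraph (Fin n)) (hφ : IsCompleteLinearMap φ)
    (hpres : ∀ G : SimpleGraph (Fin n), indepNum (φ G) = t ↔ indepNum G = t) :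
    ∀ i : Fin n, ∃ i' : Fin n, φ (starGraph i) = starGraph i' := by
  exact stmt11_general ht (by rw [Fintype.card_fin]; omega) hφ.1 hpres
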